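/- Let (X,𝒜) be a measurable space and let M be a real maximal ideal of M(X,𝒜) that is free, i.e., ⋂_{f ∈ M} Z(f) = ∅. Then M is not an isolated point of the space RMax(X,𝒜) with its subspace hull-kernel topology. -/

import Mathlib

/-!
The fixed ideals `M_x = {f | f x = 0}` are real maximal ideals, and they are dense in `RMax(X, 𝒜)`:
a nonempty open set contains some `{N | f ∉ N}` which is itself nonempty, so `f ≠ 0`, and
`f x ≠ 0` for some `x` puts `M_x` into that set. An isolated point is therefore some `M_x`, and `M_x`
is not free, since `x` is a common zero of its elements.
-/

open MeasureTheory

/-- The ring `M(X, 𝒜)` of all real-valued measurable functions on a measurable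
space `X`, as a subring of `X → ℝ` under pointwise operations. -/
def Mring (X : Type*) [MeasurableSpace X] : Subring (X → ℝ) where
  carrier := {f : X → ℝ | Measurable f}
  mul_mem' hf hg := hf.mul hg
  one_mem' := measurable_one
  add_mem' hf hg := hf.add hg
  zero_mem' := measurable_zero
  neg_mem' hf := hf.neg

/-- The zero set `Z(f)` of a measurable function `f`. -/
def Zset {X : Type*} [MeasurableSpace X] (f : Mring X) : Set X :=
  {x : X | (f : X → ℝ) x = 0}

/-- The constant function with value `r`, as an element of `M(X, 𝒜)`. -/
def constM (X : Type*) [MeasurableSpace X] (r : ℝ) : Mring X :=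
  ⟨fun _ => r, measurable_const⟩

/-- A real maximal ideal: a maximal ideal modulo which every function is
congruent to a constant. -/
def IsRealMax {X : Type*} [MeasurableSpace X] (M : Ideal (Mring X)) : Prop :=
  M.IsMaximal ∧ ∀ f : Mring X, ∃ r : ℝ, f - constM X r ∈ M

/-- `RMax(X,𝒜)`: the set of real maximal ideals of `M(X,𝒜)`. -/
def RMax (X : Type*) [MeasurableSpace X] : Type _ :=
  {M : Ideal (Mring X) // IsRealMax M}

/-- `B_f^R = {M ∈ RMax(X,𝒜) : f ∈ M}`. -/
def BR (X : Type*) [MeasurableSpace X] (f : Mring X) : Set (RMax X) :=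
  {M : RMax X | f ∈ M.1}

/-- The (subspace) hull-kernel topology on `RMax(X,𝒜)`: the sets `B_f^R` form a
base for the closed sets. -/
instance RMaxTop (X : Type*) [MeasurableSpace X] : TopologicalSpace (RMax X) :=
  TopologicalSpace.generateFrom {U : Set (RMax X) | ∃ f : Mring X, U = (BR X f)ᶜ}

/-- The fixed ideal `M_x` of all measurable functions vanishing at `x`. -/
def fixedIdeal {X : Type*} [MeasurableSpace X] (x : X) : Ideal (Mring X) :=
  RingHom.ker ((Pi.evalRingHom (fun _ : X => ℝ) x).comp (Mring X).subtype)

theorem mem_fixedIdeal {X : Type*} [MeasurableSpace X] {x : X} {f : Mring X} :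
    f ∈ fixedIdeal x ↔ (f : X → ℝ) x = 0 := Iff.rfl

theorem isRealMax_fixedIdeal {X : Type*} [MeasurableSpace X] (x : X) :
    IsRealMax (fixedIdeal x) := by
  refine ⟨RingHom.ker_isMaximal_of_surjective _ fun r => ⟨constM X r, rfl⟩, fun f => ?_⟩
  exact ⟨(f : X → ℝ) x, sub_self ((f : X → ℝ) x)⟩

/-- The complements of the sets `BR X f` form a base of the topology, not merely a subbase:
they are closed under finite intersections, as maximal ideals are prime. -/
theorem exists_compl_BR_subset {X : Type*} [MeasurableSpace X] {U : Set (RMax X)}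
    (hU : IsOpen U) : ∀ N ∈ U, ∃ f : Mring X, f ∉ N.1 ∧ (BR X f)ᶜ ⊆ U := by
  change TopologicalSpace.GenerateOpen _ U at hU
  induction hU with
  | basic s hs =>
    obtain ⟨f, rfl⟩ := hs
    exact fun N hN => ⟨f, hN, subset_rfl⟩
  | univ =>
    exact fun N _ => ⟨1, (Ideal.ne_top_iff_one _).1 N.2.1.ne_top, Set.subset_univ _⟩
  | inter s t _ _ ihs iht =>
    intro N hN
    obtain ⟨f, hf, hfs⟩ := ihs N hN.1
    obtain ⟨g, hg, hgt⟩ := iht N hN.2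
    refine ⟨f * g, fun h => (N.2.1.isPrime.mem_or_mem h).elim hf hg, fun P hP => ?_⟩
    exact ⟨hfs fun h => hP (P.1.mul_mem_right g h), hgt fun h => hP (P.1.mul_mem_left f h)⟩
  | sUnion S _ ih =>
    rintro N ⟨s, hs, hN⟩
    obtain ⟨f, hf, hfs⟩ := ih s hs N hN
    exact ⟨f, hf, hfs.trans (Set.subset_sUnion_of_mem hs)⟩

/-- A free real maximal ideal is never an isolated point of `RMax(X,𝒜)`. -/
theorem stmt6 {X : Type*} [MeasurableSpace X] (M : Ideal (Mring X))
    (hM : IsRealMax M) (hfree : (⋂ f ∈ M, Zset f) = ∅) :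
    ¬ IsOpen ({⟨M, hM⟩} : Set (RMax X)) := by
  intro hopen
  obtain ⟨f, hf, hfM⟩ := exists_compl_BR_subset hopen ⟨M, hM⟩ rfl
  have hne : ∃ x, (f : X → ℝ) x ≠ 0 := by
    by_contra! h
    have h0 : f = 0 := Subtype.ext (funext h)
    exact hf (h0 ▸ M.zero_mem)
  obtain ⟨x, hx⟩ := hne
  have hmem : (⟨fixedIdeal x, isRealMax_fixedIdeal x⟩ : RMax X) ∈ (BR X f)ᶜ :=
    fun h => hx (mem_fixedIdeal.1 h)
  have hMx : fixedIdeal x = M := congrArg Subtype.val (hfM hmem)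
  have hxZ : x ∈ ⋂ f ∈ M, Zset f :=
    Set.mem_iInter₂.2 fun g hg => mem_fixedIdeal.1 (hMx ▸ hg)
  rw [hfree] at hxZ
  exact hxZ
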